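/- Suppose Assumptions C1 and C2 hold. Then there exists a unique stationary process (Y_t)_{t∈ℤ} with values in E = {1,…,N} satisfying the recursion Y_t = K⁻_{Z_{t−1}}(ε_t | Y_{t−1}, …, Y_{t−q}) for all t ∈ ℤ, and the process ((Y_t, Z_t))_{t∈ℤ} is ergodic. -/

import Mathlib

open MeasureTheory Filter Topology ProbabilityTheory
open scoped ENNReal NNReal

noncomputable section

/-- Shift on the two-sided path space. -/
def pathShift {α : Type*} (x : ℤ → α) : ℤ → α := fun t => x (t + 1)

/-- The conditional quantile `K⁻(u) = inf{i : Σ_{j ≤ i} K(j) ≥ u}` associated with a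
probability vector `K` on `Fin (N+1)` (with the convention that it equals the last state
when the defining set is empty). -/
noncomputable def quantileCat {N : ℕ} (K : Fin (N + 1) → ℝ) (u : ℝ) : Fin (N + 1) := by
  classical
  exact
    if h : ∃ i : Fin (N + 1), u ≤ ∑ j ∈ Finset.univ.filter (· ≤ i), K j then
      (Finset.univ.filter fun i : Fin (N + 1) =>
          u ≤ ∑ j ∈ Finset.univ.filter (· ≤ i), K j).min'
        ⟨h.choose, by simpa using h.choose_spec⟩
    else Fin.last N

section CatHelpers

lemma quantileCat_eq_iff {N : ℕ} (K : Fin (N + 1) → ℝ) (u : ℝ) (i : Fin (N + 1)) :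
    quantileCat K u = i ↔
      ((u ≤ ∑ j ∈ Finset.univ.filter (· ≤ i), K j) ∧
        ∀ l < i, ¬ u ≤ ∑ j ∈ Finset.univ.filter (· ≤ l), K j) ∨
      (i = Fin.last N ∧ ∀ l, ¬ u ≤ ∑ j ∈ Finset.univ.filter (· ≤ l), K j) := by
  classical
  unfold quantileCat
  split_ifs with h
  · refine (Finset.min'_eq_iff _ _ _).trans ?_
    constructor
    · rintro ⟨h1, h2⟩
      left
      refine ⟨by simpa using h1, fun l hl hu => ?_⟩
      exact absurd (h2 l (by simpa using hu)) (not_le.2 hl)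
    · rintro (⟨h1, h2⟩ | ⟨_, h2⟩)
      · refine ⟨by simpa using h1, fun l hl => ?_⟩
        by_contra hlt
        exact h2 l (not_le.1 hlt) (by simpa using hl)
      · exact absurd h.choose_spec (h2 _)
  · push Not at h
    constructor
    · rintro rfl
      exact Or.inr ⟨rfl, fun l => not_le.2 (h l)⟩
    · rintro (⟨h1, _⟩ | ⟨h1, _⟩)
      · exact absurd h1 (not_le.2 (h _))
      · exact h1.symm

lemma quantileCat_eq_zero {N : ℕ} (K : Fin (N + 1) → ℝ) (u : ℝ) (h : u ≤ K 0) :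
    quantileCat K u = 0 := by
  rw [quantileCat_eq_iff]
  left
  refine ⟨?_, fun l hl => absurd hl (Fin.not_lt_zero l)⟩
  have : (Finset.univ.filter fun j : Fin (N + 1) => j ≤ 0) = {0} := by
    ext j; simp
  rw [this]; simpa using h

lemma measurable_quantileCat {β : Type*} [MeasurableSpace β] {N : ℕ}
    {K : β → Fin (N + 1) → ℝ} {u : β → ℝ} (hK : ∀ i, Measurable fun b => K b i)
    (hu : Measurable u) : Measurable fun b => quantileCat (K b) (u b) := by
  refine measurable_to_countable' fun i => ?_
  have hl : ∀ l : Fin (N + 1), MeasurableSet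
      {b | u b ≤ ∑ j ∈ Finset.univ.filter (· ≤ l), K b j} := fun l =>
    measurableSet_le hu (Finset.measurable_sum _ fun j _ => hK j)
  have : (fun b => quantileCat (K b) (u b)) ⁻¹' {i} =
      {b | ((u b ≤ ∑ j ∈ Finset.univ.filter (· ≤ i), K b j) ∧
        ∀ l < i, ¬ u b ≤ ∑ j ∈ Finset.univ.filter (· ≤ l), K b j) ∨
      (i = Fin.last N ∧ ∀ l, ¬ u b ≤ ∑ j ∈ Finset.univ.filter (· ≤ l), K b j)} := by
    ext b; simp only [Set.mem_preimage, Set.mem_singleton_iff, Set.mem_ofPred_eq]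
    exact quantileCat_eq_iff _ _ _
  rw [this]
  refine MeasurableSet.union (MeasurableSet.inter (hl i) ?_)
    (MeasurableSet.inter (MeasurableSet.const _) ?_)
  · have : {b | ∀ l < i, ¬ u b ≤ ∑ j ∈ Finset.univ.filter (· ≤ l), K b j} =
      ⋂ l, ⋂ (_ : l < i), {b | u b ≤ ∑ j ∈ Finset.univ.filter (· ≤ l), K b j}ᶜ := by
      ext b; simp
    exact (congrArg MeasurableSet this).mpr
      (MeasurableSet.iInter fun l => MeasurableSet.iInter fun _ => (hl l).compl)
  · have : {b | ∀ l, ¬ u b ≤ ∑ j ∈ Finset.univ.filter (· ≤ l), K b j} =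
      ⋂ l, {b | u b ≤ ∑ j ∈ Finset.univ.filter (· ≤ l), K b j}ᶜ := by
      ext b; simp
    exact (congrArg MeasurableSet this).mpr (MeasurableSet.iInter fun l => (hl l).compl)

variable {α : Type*} {N q : ℕ}

/-- One application of the recursion to a whole path. -/
def catStep (K : α → (Fin q → Fin (N + 1)) → Fin (N + 1) → ℝ) (x : ℤ → α × ℝ)
    (y : ℤ → Fin (N + 1)) : ℤ → Fin (N + 1) :=
  fun t => quantileCat (K (x (t - 1)).1 fun i : Fin q => y (t - 1 - (i : ℤ))) (x t).2

/-- The recursion forces state zero at time `t`. -/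
def catReset (K : α → (Fin q → Fin (N + 1)) → Fin (N + 1) → ℝ) (x : ℤ → α × ℝ) (t : ℤ) : Prop :=
  ∀ v, (x t).2 ≤ K (x (t - 1)).1 v 0

/-- `q` consecutive resets ending at time `s`. -/
def catCoal (K : α → (Fin q → Fin (N + 1)) → Fin (N + 1) → ℝ) (x : ℤ → α × ℝ) (s : ℤ) : Prop :=
  ∀ j : ℕ, j < q → catReset K x (s - q + 1 + j)

/-- Backward limit of the iterated recursion. -/
def catSol (K : α → (Fin q → Fin (N + 1)) → Fin (N + 1) → ℝ) (x : ℤ → α × ℝ) :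
    ℤ → Fin (N + 1) :=
  fun t => liminf (fun n : ℕ => (catStep K x)^[n] (fun _ => 0) t) atTop

variable (K : α → (Fin q → Fin (N + 1)) → Fin (N + 1) → ℝ)

lemma catStep_reset {x : ℤ → α × ℝ} {t : ℤ} (h : catReset K x t) (y : ℤ → Fin (N + 1)) :
    catStep K x y t = 0 := quantileCat_eq_zero _ _ (h _)

lemma catCoal_iterate {x : ℤ → α × ℝ} {s : ℤ} (h : catCoal K x s) (k : ℕ) :
    ∀ (n n' : ℕ) (y y' : ℤ → Fin (N + 1)) (r : ℤ), k + 1 ≤ n → k + 1 ≤ n' →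
      s - q + 1 ≤ r → r ≤ s + k →
      (catStep K x)^[n] y r = (catStep K x)^[n'] y' r := by
  induction k with
  | zero =>
    intro n n' y y' r hn hn' h1 h2
    obtain ⟨n, rfl⟩ : ∃ m, n = m + 1 := ⟨n - 1, by omega⟩
    obtain ⟨n', rfl⟩ : ∃ m, n' = m + 1 := ⟨n' - 1, by omega⟩
    have hr : catReset K x r := by
      have := h (r - (s - q + 1)).toNat (by omega)
      rwa [show s - q + 1 + ((r - (s - q + 1)).toNat : ℤ) = r by omega] at this
    rw [Function.iterate_succ_apply', Function.iterate_succ_apply', catStep_reset K hr,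
      catStep_reset K hr]
  | succ k ih =>
    intro n n' y y' r hn hn' h1 h2
    by_cases hr : r ≤ s + k
    · exact ih n n' y y' r (by omega) (by omega) h1 hr
    obtain ⟨n, rfl⟩ : ∃ m, n = m + 1 := ⟨n - 1, by omega⟩
    obtain ⟨n', rfl⟩ : ∃ m, n' = m + 1 := ⟨n' - 1, by omega⟩
    rw [Function.iterate_succ_apply', Function.iterate_succ_apply']
    unfold catStep
    congr 2
    funext i
    have := i.2
    exact ih n n' y y' _ (by omega) (by omega) (by omega) (by omega)

lemma catSol_eq {x : ℤ → α × ℝ} {s : ℤ} (h : catCoal K x s) (k n : ℕ) (y : ℤ → Fin (N + 1))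
    (r : ℤ) (hn : k + 1 ≤ n) (h1 : s - q + 1 ≤ r) (h2 : r ≤ s + k) :
    catSol K x r = (catStep K x)^[n] y r := by
  unfold catSol
  refine Tendsto.liminf_eq ?_
  refine tendsto_const_nhds.congr' ?_
  filter_upwards [eventually_ge_atTop (k + 1)] with m hm
  exact catCoal_iterate K h k n m _ _ r hn hm h1 h2

lemma catSol_fixed {x : ℤ → α × ℝ} (h : ∀ m : ℤ, ∃ s ≤ m, catCoal K x s) (t : ℤ) :
    catSol K x t = catStep K x (catSol K x) t := by
  obtain ⟨s, hs, hc⟩ := h (t - 1)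
  set k := (t - s).toNat with hk
  rw [catSol_eq K hc k (k + 2) (fun _ => 0) t (by omega) (by omega) (by omega),
    Function.iterate_succ_apply']
  unfold catStep
  congr 2
  funext i
  have := i.2
  exact (catSol_eq K hc k (k + 1) (fun _ => 0) _ (by omega) (by omega) (by omega)).symm

lemma catSol_unique {x : ℤ → α × ℝ} (h : ∀ m : ℤ, ∃ s ≤ m, catCoal K x s)
    (y : ℤ → Fin (N + 1)) (hy : ∀ t, y t = catStep K x y t) (t : ℤ) : y t = catSol K x t := by
  obtain ⟨s, hs, hc⟩ := h (t - 1)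
  rw [catSol_eq K hc (t - s).toNat ((t - s).toNat + 1) y t (by omega) (by omega) (by omega),
    Function.iterate_fixed (funext fun t => (hy t).symm)]

lemma catStep_shift (x : ℤ → α × ℝ) (y : ℤ → Fin (N + 1)) :
    catStep K (pathShift x) (pathShift y) = pathShift (catStep K x y) := by
  funext t
  simp only [catStep, pathShift]
  have e : t - 1 + 1 = t + 1 - 1 := by ring
  rw [e]
  congr 2
  funext i
  congr 1; ring

lemma catStep_iterate_shift (x : ℤ → α × ℝ) (n : ℕ) :
    (catStep K (pathShift x))^[n] (fun _ => 0) = pathShift ((catStep K x)^[n] fun _ => 0) := by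
  induction n with
  | zero => rfl
  | succ n ih => rw [Function.iterate_succ_apply', ih, catStep_shift, Function.iterate_succ_apply']

lemma catSol_shift (x : ℤ → α × ℝ) : catSol K (pathShift x) = pathShift (catSol K x) := by
  funext t
  simp only [catSol, catStep_iterate_shift]
  rfl

lemma catReset_shift (x : ℤ → α × ℝ) (t : ℤ) :
    catReset K (pathShift x) t ↔ catReset K x (t + 1) := by
  simp only [catReset, pathShift]
  rw [show t - 1 + 1 = t + 1 - 1 by ring]

lemma catCoal_shift (x : ℤ → α × ℝ) (s : ℤ) :
    catCoal K (pathShift x) s ↔ catCoal K x (s + 1) := by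
  simp only [catCoal, catReset_shift]
  refine forall₂_congr fun j _ => ?_
  rw [show s - q + 1 + (j : ℤ) + 1 = s + 1 - q + 1 + j by ring]

variable [MeasurableSpace α]

lemma measurable_pathShift {β : Type*} [MeasurableSpace β] :
    Measurable (pathShift : (ℤ → β) → ℤ → β) :=
  measurable_pi_lambda _ fun t => measurable_pi_apply (t + 1)

variable {K}

lemma measurable_catStep_iterate (hK : ∀ y i, Measurable fun z => K z y i)
    (n : ℕ) (t : ℤ) :
    Measurable fun x : ℤ → α × ℝ => (catStep K x)^[n] (fun _ => 0) t := by
  induction n generalizing t with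
  | zero => exact measurable_const
  | succ n ih =>
    simp only [Function.iterate_succ_apply']
    unfold catStep at ih ⊢
    have hg : Measurable fun p : ((ℤ → α × ℝ) × (Fin q → Fin (N + 1))) =>
        quantileCat (K (p.1 (t - 1)).1 p.2) (p.1 t).2 := by
      refine measurable_from_prod_countable_left fun v => ?_
      exact measurable_quantileCat
        (fun i => (hK v i).comp (measurable_fst.comp (measurable_pi_apply (t - 1))))
        (measurable_snd.comp (measurable_pi_apply t))
    exact hg.comp (measurable_id.prodMk (measurable_pi_lambda _ fun i => ih _))

lemma measurable_catSol (hK : ∀ y i, Measurable fun z => K z y i) :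
    Measurable fun x : ℤ → α × ℝ => catSol K x :=
  measurable_pi_lambda _ fun t =>
    Measurable.liminf fun n => measurable_catStep_iterate hK n t

lemma measurableSet_catReset (hK : ∀ y i, Measurable fun z => K z y i)
    {β : Type*} {mβ : MeasurableSpace β} {z : β → α} {u : β → ℝ}
    (hz : Measurable z) (hu : Measurable u) :
    MeasurableSet {b | ∀ v, u b ≤ K (z b) v 0} := by
  rw [Set.ofPred_forall]
  exact MeasurableSet.iInter fun v => measurableSet_le hu ((hK v 0).comp hz)

lemma measurableSet_catCoal (hK : ∀ y i, Measurable fun z => K z y i)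
    (s : ℤ) : MeasurableSet {x : ℤ → α × ℝ | catCoal K x s} := by
  unfold catCoal
  simp only [Set.ofPred_forall]
  refine MeasurableSet.iInter fun j => MeasurableSet.iInter fun _ => ?_
  exact measurableSet_catReset hK (measurable_fst.comp (measurable_pi_apply _))
    (measurable_snd.comp (measurable_pi_apply _))

lemma catReset_pos (hK : ∀ y i, Measurable fun z => K z y i)
    {Ω : Type*} [m0 : MeasurableSpace Ω]
    (P : Measure Ω) [IsProbabilityMeasure P]
    (hC1 : ∀ z y i, 0 < K z y i)
    (Z : ℤ → Ω → α) (ε : ℤ → Ω → ℝ)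
    (hεmeas : ∀ t, Measurable (ε t))
    (hεunif : ∀ t : ℤ, P.map (ε t) = (volume : Measure ℝ).restrict (Set.Icc 0 1))
    (hεindep : ∀ t : ℤ, Indep (MeasurableSpace.comap (ε t) inferInstance)
      (⨆ (s : ℤ) (_ : s ≤ t - 1),
        MeasurableSpace.comap (fun ω => (Z s ω, ε s ω)) inferInstance) P) (m : ℤ) (k : ℕ) :
    MeasurableSet[⨆ (s : ℤ) (_ : s ≤ m + k),
        MeasurableSpace.comap (fun ω => (Z s ω, ε s ω)) inferInstance]
      {ω | ∀ j : ℕ, j < k → catReset K (fun t => (Z t ω, ε t ω)) (m + 1 + j)} ∧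
    0 < P {ω | ∀ j : ℕ, j < k → catReset K (fun t => (Z t ω, ε t ω)) (m + 1 + j)} := by
  set F : ℤ → MeasurableSpace Ω := fun t => ⨆ (s : ℤ) (_ : s ≤ t),
        MeasurableSpace.comap (fun ω => (Z s ω, ε s ω)) inferInstance with hF
  have hFmono : ∀ a b, a ≤ b → F a ≤ F b := fun a b hab =>
    iSup₂_le fun s hs => le_iSup₂_of_le s (hs.trans hab) le_rfl
  have hpm : ∀ t a, t ≤ a → Measurable[F a] fun ω => (Z t ω, ε t ω) := fun t a hta =>
    Measurable.of_comap_le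
      (le_iSup₂_of_le (f := fun s (_ : s ≤ a) =>
        MeasurableSpace.comap (fun ω => (Z s ω, ε s ω)) inferInstance) t hta le_rfl)
  change MeasurableSet[F (m + k)] _ ∧ _
  induction k with
  | zero => simp
  | succ k ih =>
    obtain ⟨ihm, ihp⟩ := ih
    set B := {ω | ∀ j : ℕ, j < k → catReset K (fun t => (Z t ω, ε t ω)) (m + 1 + j)} with hB
    set C := {ω | catReset K (fun t => (Z t ω, ε t ω)) (m + 1 + k)} with hC
    have hBC : {ω | ∀ j : ℕ, j < k + 1 → catReset K (fun t => (Z t ω, ε t ω)) (m + 1 + j)}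
        = B ∩ C := by
      ext ω
      simp only [hB, hC, Set.mem_inter_iff, Set.mem_ofPred_eq, Nat.lt_succ_iff_lt_or_eq]
      constructor
      · exact fun h => ⟨fun j hj => h j (Or.inl hj), h k (Or.inr rfl)⟩
      · rintro ⟨h1, h2⟩ j (hj | rfl)
        · exact h1 j hj
        · exact h2
    rw [hBC]
    refine ⟨MeasurableSet.inter (hFmono _ _ (by push_cast; omega) _ ihm) ?_, ?_⟩
    · refine @measurableSet_catReset α N q K _ hK Ω (F (m + (k + 1 : ℕ))) _ _ ?_ ?_
      · exact measurable_fst.comp (hpm _ _ (by push_cast; omega))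
      · exact measurable_snd.comp (hpm _ _ (by push_cast; omega))
    · let D : ℕ → Set Ω := fun n => {ω | ∀ v, 1 / ((n : ℝ) + 1) ≤ K (Z (m + k) ω) v 0}
      have hD : ⋃ n, B ∩ D n = B := by
        rw [← Set.inter_iUnion]
        refine Set.inter_eq_left.2 fun ω _ => ?_
        have : ∀ᶠ n : ℕ in atTop, ∀ v, 1 / ((n : ℝ) + 1) ≤ K (Z (m + k) ω) v 0 :=
          eventually_all.2 fun v =>
            (tendsto_one_div_add_atTop_nhds_zero_nat.eventually_lt_const (hC1 _ v 0)).mono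
              fun _ h => h.le
        exact Set.mem_iUnion.2 this.exists
      obtain ⟨n, hn⟩ : ∃ n, P (B ∩ D n) ≠ 0 := by
        by_contra! hcon
        have := measure_iUnion_null hcon
        rw [hD] at this
        exact ihp.ne' this
      have hDm : MeasurableSet[F (m + k)] (D n) :=
        @measurableSet_catReset α N q K _ hK Ω (F (m + k)) _ (fun _ => 1 / ((n : ℝ) + 1))
          (measurable_fst.comp (hpm _ _ le_rfl)) measurable_const
      have hind := (Indep_iff _ _ _).1 (hεindep (m + 1 + k))
        (ε (m + 1 + k) ⁻¹' Set.Iic (1 / ((n : ℝ) + 1))) (B ∩ D n) ⟨_, measurableSet_Iic, rfl⟩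
        (by
          rw [show m + 1 + (k : ℤ) - 1 = m + k by ring]
          exact MeasurableSet.inter ihm hDm)
      have hsub : (ε (m + 1 + k) ⁻¹' Set.Iic (1 / ((n : ℝ) + 1))) ∩ (B ∩ D n) ⊆ B ∩ C := by
        rintro ω ⟨h1, h2, h3⟩
        refine ⟨h2, fun v => ?_⟩
        have h4 := h3 v
        simp only [show m + 1 + (k : ℤ) - 1 = m + k by ring]
        exact le_trans h1 h4
      refine lt_of_lt_of_le ?_ (measure_mono hsub)
      rw [hind]
      refine ENNReal.mul_pos ?_ hn
      rw [← Measure.map_apply (hεmeas _) measurableSet_Iic, hεunif,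
        Measure.restrict_apply measurableSet_Iic]
      have hle : Set.Icc (0 : ℝ) (1 / ((n : ℝ) + 1)) ⊆
          Set.Iic (1 / ((n : ℝ) + 1)) ∩ Set.Icc 0 1 := by
        rintro u ⟨h1, h2⟩
        refine ⟨h2, h1, h2.trans ?_⟩
        rw [div_le_one (by positivity)]
        linarith [Nat.cast_nonneg (α := ℝ) n]
      refine (lt_of_lt_of_le ?_ (measure_mono hle)).ne'
      rw [Real.volume_Icc]
      simp only [sub_zero, ENNReal.ofReal_pos]
      positivity

lemma ae_catCoal (hK : ∀ y i, Measurable fun z => K z y i)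
    (μ : Measure (ℤ → α × ℝ)) [IsProbabilityMeasure μ] (hμ : Ergodic pathShift μ)
    (hpos : ∀ s, 0 < μ {x | catCoal K x s}) :
    ∀ᵐ x ∂μ, ∀ m : ℤ, ∃ s ≤ m, catCoal K x s := by
  rw [ae_all_iff]
  intro m
  have hm : MeasurableSet {x : ℤ → α × ℝ | ∃ s ≤ m, catCoal K x s} := by
    have : {x : ℤ → α × ℝ | ∃ s ≤ m, catCoal K x s} =
        ⋃ s, ⋃ (_ : s ≤ m), {x | catCoal K x s} := by
      ext x; simp
    rw [this]
    exact MeasurableSet.iUnion fun s => MeasurableSet.iUnion fun _ => measurableSet_catCoal hK s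
  have hsub : {x : ℤ → α × ℝ | ∃ s ≤ m, catCoal K x s} ⊆
      pathShift ⁻¹' {x : ℤ → α × ℝ | ∃ s ≤ m, catCoal K x s} := by
    rintro x ⟨s, hs, hc⟩
    refine ⟨s - 1, by omega, ?_⟩
    rw [catCoal_shift]
    simpa using hc
  rcases hμ.ae_empty_or_univ_of_ae_le_preimage hm.nullMeasurableSet
    (HasSubset.Subset.eventuallyLE hsub) with h | h
  · exfalso
    rw [ae_eq_empty] at h
    refine (hpos m).ne' (measure_mono_null ?_ h)
    exact fun x hx => ⟨m, le_rfl, hx⟩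
  · exact eventuallyEq_univ.1 h

end CatHelpers

/-- Proposition 4.6, part 1: under Assumptions C1–C2 there is a unique
stationary process `(Y_t)` with values in `E = {1, …, N}` satisfying
`Y_t = K⁻_{Z_{t-1}}(ε_t | Y_{t-1}, …, Y_{t-q})`, and `((Y_t, Z_t))` is ergodic. -/
theorem categorical_time_series_solution
    {Ω : Type*} {N d q : ℕ} [m0 : MeasurableSpace Ω]
    (P : Measure Ω) [IsProbabilityMeasure P]
    (hq : 0 < q)
    (𝒵 : Set (Fin d → ℝ)) (h𝒵 : MeasurableSet 𝒵)
    (K : 𝒵 → (Fin q → Fin (N + 1)) → Fin (N + 1) → ℝ)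
    (hKmeas : ∀ (y : Fin q → Fin (N + 1)) (i : Fin (N + 1)),
      Measurable fun z : 𝒵 => K z y i)
    -- K_z(·|y) is a probability kernel
    (hKsum : ∀ (z : 𝒵) (y : Fin q → Fin (N + 1)), ∑ i, K z y i = 1)
    -- Assumption C1 : the kernels are uniformly bounded below on each z
    (hC1 : ∀ (z : 𝒵) (y : Fin q → Fin (N + 1)) (i : Fin (N + 1)), 0 < K z y i)
    -- Assumption C2 : ((Z_t, ε_t)) stationary ergodic, ε_t uniform on [0,1] and
    -- independent of ℱ_{t-1}
    (Z : ℤ → Ω → 𝒵) (ε : ℤ → Ω → ℝ)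
    (hZmeas : ∀ t, Measurable (Z t)) (hεmeas : ∀ t, Measurable (ε t))
    (hstat : Ergodic pathShift (P.map (fun ω (t : ℤ) => (Z t ω, ε t ω))))
    (hεunif : ∀ t : ℤ, P.map (ε t) = (volume : Measure ℝ).restrict (Set.Icc 0 1))
    (hεindep : ∀ t : ℤ, Indep (MeasurableSpace.comap (ε t) inferInstance)
      (⨆ (s : ℤ) (_ : s ≤ t - 1),
        MeasurableSpace.comap (fun ω => (Z s ω, ε s ω)) inferInstance) P) :
    ∃ Y : ℤ → Ω → Fin (N + 1),
      (∀ t, Measurable (Y t)) ∧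
      -- Y solves the recursion Y_t = K⁻_{Z_{t-1}}(ε_t | Y_{t-1}, …, Y_{t-q})
      (∀ t : ℤ, ∀ᵐ ω ∂P,
        Y t ω = quantileCat (K (Z (t - 1) ω) (fun i : Fin q => Y (t - 1 - (i : ℤ)) ω))
          (ε t ω)) ∧
      -- Y is stationary
      MeasurePreserving pathShift
        (P.map (fun ω (t : ℤ) => Y t ω)) (P.map (fun ω (t : ℤ) => Y t ω)) ∧
      -- the pair process ((Y_t, Z_t)) is ergodic
      Ergodic pathShift (P.map (fun ω (t : ℤ) => (Y t ω, Z t ω))) ∧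
      -- uniqueness among stationary solutions
      (∀ Y' : ℤ → Ω → Fin (N + 1), (∀ t, Measurable (Y' t)) →
        MeasurePreserving pathShift
          (P.map (fun ω (t : ℤ) => Y' t ω)) (P.map (fun ω (t : ℤ) => Y' t ω)) →
        (∀ t : ℤ, ∀ᵐ ω ∂P,
          Y' t ω = quantileCat (K (Z (t - 1) ω) (fun i : Fin q => Y' (t - 1 - (i : ℤ)) ω))
            (ε t ω)) →
        ∀ t, Y' t =ᵐ[P] Y t) := by
  classical
  set X : Ω → ℤ → 𝒵 × ℝ := fun ω t => (Z t ω, ε t ω) with hX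
  have hXm : Measurable X := measurable_pi_lambda _ fun t => (hZmeas t).prodMk (hεmeas t)
  have hXp : MeasurePreserving X P (P.map X) := hXm.measurePreserving P
  haveI : IsProbabilityMeasure (P.map X) := Measure.isProbabilityMeasure_map hXm.aemeasurable
  have hpos : ∀ s, 0 < P.map X {x | catCoal K x s} := by
    intro s
    rw [Measure.map_apply hXm (measurableSet_catCoal hKmeas s)]
    exact (catReset_pos hKmeas P hC1 Z ε hεmeas hεunif hεindep (s - q) q).2
  have hG : ∀ᵐ ω ∂P, ∀ m : ℤ, ∃ s ≤ m, catCoal K (X ω) s :=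
    ae_of_ae_map hXm.aemeasurable (ae_catCoal hKmeas _ hstat hpos)
  have hS := measurable_catSol hKmeas
  have hΨ : Measurable fun x : ℤ → 𝒵 × ℝ => fun t => (catSol K x t, (x t).1) :=
    measurable_pi_lambda _ fun t => ((measurable_pi_apply t).comp hS).prodMk
      (measurable_fst.comp (measurable_pi_apply t))
  refine ⟨fun t ω => catSol K (X ω) t,
    fun t => (measurable_pi_apply t).comp (hS.comp hXm), ?_, ?_, ?_, ?_⟩
  · intro t
    filter_upwards [hG] with ω hω
    exact catSol_fixed K hω t
  · have : P.map (fun ω (t : ℤ) => catSol K (X ω) t) = (P.map X).map (catSol K) :=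
      (Measure.map_map hS hXm).symm
    rw [this]
    exact (hS.measurePreserving _).of_semiconj hstat.toMeasurePreserving
      (catSol_shift K) measurable_pathShift
  · have : P.map (fun ω (t : ℤ) => (catSol K (X ω) t, Z t ω)) =
        (P.map X).map fun x t => (catSol K x t, (x t).1) :=
      (Measure.map_map hΨ hXm).symm
    rw [this]
    refine (hΨ.measurePreserving _).ergodic_of_ergodic_semiconj hstat measurable_pathShift ?_
    intro x
    simp only [catSol_shift]
    rfl
  · intro Y' _ _ hY' t
    filter_upwards [hG, ae_all_iff.2 hY'] with ω hω hy
    exact catSol_unique K hω (fun t => Y' t ω) hy t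


end
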